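/- Let M₁, M₂ be finite MDPs with the same discount factor γ ∈ [0,1), and let M_{1̂} = ⟨S₁, A₁, P̂₁, R₁, γ⟩ and M_{2̂} = ⟨S₂, A₂, P̂₂, R₂, γ⟩ be MDPs that differ from M₁, M₂ only in their transition probabilities. Then the pairwise GBSMs satisfy, for all s ∈ S₁ and s' ∈ S₂: |d^{1-2}(s,s') − d^{1̂-2̂}(s,s')| ≤ max_{s∈S₁} d^{1-1̂}(s,s) + max_{s'∈S₂} d^{2-2̂}(s',s'). -/

import Mathlib

open scoped BigOperators

noncomputable section

/-- The (finite, linear-programming) 1-Wasserstein distance between probability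
vectors `P` on `S₁` and `Q` on `S₂` with cost function `d`. -/
def W1 {S₁ S₂ : Type*} [Fintype S₁] [Fintype S₂]
    (P : S₁ → ℝ) (Q : S₂ → ℝ) (d : S₁ → S₂ → ℝ) : ℝ :=
  sInf { c : ℝ | ∃ lam : S₁ → S₂ → ℝ,
    (∀ i j, 0 ≤ lam i j) ∧ (∀ i, ∑ j, lam i j = P i) ∧
    (∀ j, ∑ i, lam i j = Q j) ∧ c = ∑ i, ∑ j, lam i j * d i j }

/-- A finite Markov decision process (without its discount factor). -/
structure FinMDP (S A : Type*) [Fintype S] [Fintype A] where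
  P : S → A → S → ℝ
  R : S → A → ℝ
  P_nonneg : ∀ s a s', 0 ≤ P s a s'
  P_sum : ∀ s a, ∑ s', P s a s' = 1

variable {S₁ A₁ S₂ A₂ : Type*} [Fintype S₁] [Fintype A₁] [Fintype S₂] [Fintype A₂]

/-- `δ(d)((s,a),(s',a')) = |R₁(s,a) − R₂(s',a')| + γ·W₁(P₁(·|s,a), P₂(·|s',a'); d)` -/
def gbsmDelta (M₁ : FinMDP S₁ A₁) (M₂ : FinMDP S₂ A₂) (γ : ℝ)
    (d : S₁ → S₂ → ℝ) (s : S₁) (a : A₁) (s' : S₂) (a' : A₂) : ℝ :=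
  |M₁.R s a - M₂.R s' a'| + γ * W1 (M₁.P s a) (M₂.P s' a') d

/-- The GBSM operator `F(d)(s,s') = H(X_s, X_{s'}; δ(d))` where `H` is the Hausdorff
metric between the finite sets `X_s = {(s,a)}`, `X_{s'} = {(s',a')}`. -/
def gbsmF (M₁ : FinMDP S₁ A₁) (M₂ : FinMDP S₂ A₂) (γ : ℝ)
    (d : S₁ → S₂ → ℝ) : S₁ → S₂ → ℝ :=
  fun s s' =>
    max (⨆ a : A₁, ⨅ a' : A₂, gbsmDelta M₁ M₂ γ d s a s' a')
        (⨅ a : A₁, ⨆ a' : A₂, gbsmDelta M₁ M₂ γ d s a s' a')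

/-- The GBSM: pointwise supremum of the iterates of `gbsmF` from the zero function. -/
def gbsm (M₁ : FinMDP S₁ A₁) (M₂ : FinMDP S₂ A₂) (γ : ℝ) : S₁ → S₂ → ℝ :=
  fun s s' => ⨆ n : ℕ, (gbsmF M₁ M₂ γ)^[n] (fun _ _ => 0) s s'

/-!
For finite MDPs `M, N, M', N'`, the GBSM obeys the quadrangle inequality
`|d(s, t) - d(s', t')| ≤ d(s, s') + d(t, t')`, just as a metric would, although the four states live
in different MDPs; the estimation error bound is the case `s = s'`, `t = t'`.
The inequality holds trivially for the zero cost and is preserved by the Wasserstein lifting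
(glue transport plans along their common marginals) and by the Hausdorff lifting (move from action
to action along the correspondences realising the two distances on the right), hence it holds for
all iterates of the GBSM operator. These are bounded, so it passes to their suprema.
-/

lemma ciInf_le_iff_exists_le_of_finite {ι α : Type*} [Finite ι] [Nonempty ι]
    [ConditionallyCompleteLinearOrder α] {f : ι → α} {c : α} : ⨅ i, f i ≤ c ↔ ∃ i, f i ≤ c := by
  refine ⟨fun h => ?_, fun ⟨i, hi⟩ => (ciInf_le (Set.finite_range f).bddBelow i).trans hi⟩
  obtain ⟨i, hi⟩ := exists_eq_ciInf_of_finite (f := f)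
  exact ⟨i, hi.trans_le h⟩

lemma abs_ciSup_sub_ciSup_le {ι : Sort*} [Nonempty ι] {u v : ι → ℝ}
    (hu : BddAbove (Set.range u)) (hv : BddAbove (Set.range v)) {ε : ℝ}
    (huv : ∀ i, |u i - v i| ≤ ε) : |(⨆ i, u i) - ⨆ i, v i| ≤ ε := by
  rw [abs_sub_le_iff, sub_le_iff_le_add', sub_le_iff_le_add']
  constructor
  · exact ciSup_le fun i => by linarith [(abs_sub_le_iff.1 (huv i)).1, le_ciSup hv i]
  · exact ciSup_le fun i => by linarith [(abs_sub_le_iff.1 (huv i)).2, le_ciSup hu i]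

section Wasserstein

variable {X Y Z W : Type*} [Fintype X] [Fintype Y] [Fintype Z] [Fintype W]
  {P : X → ℝ} {Q : Y → ℝ} {R : Z → ℝ} {U : W → ℝ}

/-- `lam` is a transport plan (coupling) from `P` to `Q`: a feasible point of the linear program
defining `W1`. -/
structure IsCoupling (P : X → ℝ) (Q : Y → ℝ) (lam : X → Y → ℝ) : Prop where
  nonneg : ∀ x y, 0 ≤ lam x y
  sum_fst : ∀ x, ∑ y, lam x y = P x
  sum_snd : ∀ y, ∑ x, lam x y = Q y

/-- The cost of the transport plan `lam` for the ground cost `d`. -/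
def transportCost (lam d : X → Y → ℝ) : ℝ :=
  ∑ x, ∑ y, lam x y * d x y

lemma transportCost_flip (lam d : X → Y → ℝ) :
    transportCost (flip lam) (flip d) = transportCost lam d :=
  Finset.sum_comm

namespace IsCoupling

lemma flip {lam : X → Y → ℝ} (h : IsCoupling P Q lam) : IsCoupling Q P (flip lam) :=
  ⟨fun y x => h.nonneg x y, h.sum_snd, h.sum_fst⟩

lemma le_fst {lam : X → Y → ℝ} (h : IsCoupling P Q lam) (x : X) (y : Y) : lam x y ≤ P x :=
  h.sum_fst x ▸ Finset.single_le_sum (fun y _ => h.nonneg x y) (Finset.mem_univ y)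

lemma eq_zero_of_fst {lam : X → Y → ℝ} (h : IsCoupling P Q lam) {x : X} (hx : P x = 0) (y : Y) :
    lam x y = 0 :=
  le_antisymm ((h.le_fst x y).trans_eq hx) (h.nonneg x y)

lemma mul (hP : P ∈ stdSimplex ℝ X) (hQ : Q ∈ stdSimplex ℝ Y) :
    IsCoupling P Q fun x y => P x * Q y where
  nonneg x y := mul_nonneg (hP.1 x) (hQ.1 y)
  sum_fst x := by rw [← Finset.mul_sum, hQ.2, mul_one]
  sum_snd y := by rw [← Finset.sum_mul, hP.2, one_mul]

lemma exists_glue {l : X → Y → ℝ} {m : Y → Z → ℝ} (hl : IsCoupling P Q l)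
    (hm : IsCoupling Q R m) :
    ∃ τ : X → Y → Z → ℝ, (∀ x y z, 0 ≤ τ x y z) ∧
      (∀ x y, ∑ z, τ x y z = l x y) ∧ ∀ y z, ∑ x, τ x y z = m y z := by
  -- Given `y`, make `x` and `z` independent. Where `Q y = 0`, the junk value `0` is the right one.
  refine ⟨fun x y z => l x y * m y z / Q y, fun x y z => ?_, fun x y => ?_, fun y z => ?_⟩
  · exact div_nonneg (mul_nonneg (hl.nonneg x y) (hm.nonneg y z))
      ((hl.nonneg x y).trans (hl.flip.le_fst y x))
  · rw [← Finset.sum_div, ← Finset.mul_sum, hm.sum_fst]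
    exact mul_div_cancel_of_imp fun hy => hl.flip.eq_zero_of_fst hy x
  · rw [← Finset.sum_div, ← Finset.sum_mul, hl.sum_snd, mul_comm]
    exact mul_div_cancel_of_imp fun hy => hm.eq_zero_of_fst hy z

lemma exists_transportCost_le_add {l : X → Y → ℝ} {m : Y → Z → ℝ} (hl : IsCoupling P Q l)
    (hm : IsCoupling Q R m) {f : X → Z → ℝ} {g : X → Y → ℝ} {h : Y → Z → ℝ}
    (hfgh : ∀ x y z, f x z ≤ g x y + h y z) :
    ∃ n, IsCoupling P R n ∧ transportCost n f ≤ transportCost l g + transportCost m h := by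
  obtain ⟨τ, hτ, hτl, hτm⟩ := hl.exists_glue hm
  refine ⟨fun x z => ∑ y, τ x y z, ⟨fun x z => Finset.sum_nonneg fun y _ => hτ x y z,
    fun x => ?_, fun z => ?_⟩, ?_⟩
  · rw [Finset.sum_comm]
    simp only [hτl, hl.sum_fst]
  · rw [Finset.sum_comm]
    simp only [hτm, hm.sum_snd]
  · have cost_l : ∑ x, ∑ y, ∑ z, τ x y z * g x y = transportCost l g := by
      simp only [← Finset.sum_mul, hτl, transportCost]
    have cost_m : ∑ x, ∑ y, ∑ z, τ x y z * h y z = transportCost m h := by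
      rw [Finset.sum_comm]
      refine Finset.sum_congr rfl fun y _ => ?_
      rw [Finset.sum_comm]
      simp only [← Finset.sum_mul, hτm]
    calc transportCost (fun x z => ∑ y, τ x y z) f
        = ∑ x, ∑ y, ∑ z, τ x y z * f x z := by
          refine Finset.sum_congr rfl fun x _ => ?_
          rw [Finset.sum_comm]
          simp only [Finset.sum_mul]
      _ ≤ ∑ x, ∑ y, ∑ z, τ x y z * (g x y + h y z) := by
          gcongr with x _ y _ z _
          · exact hτ x y z
          · exact hfgh x y z
      _ = transportCost l g + transportCost m h := by
          simp only [mul_add, Finset.sum_add_distrib, cost_l, cost_m]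

end IsCoupling

lemma W1_le_transportCost {lam : X → Y → ℝ} (h : IsCoupling P Q lam) (d : X → Y → ℝ) :
    W1 P Q d ≤ transportCost lam d := by
  refine csInf_le ⟨∑ x, ∑ y, -(P x * |d x y|), ?_⟩ ⟨lam, h.nonneg, h.sum_fst, h.sum_snd, rfl⟩
  rintro _ ⟨l, hl_nonneg, hl_fst, hl_snd, rfl⟩
  have hl : IsCoupling P Q l := ⟨hl_nonneg, hl_fst, hl_snd⟩
  refine Finset.sum_le_sum fun x _ => Finset.sum_le_sum fun y _ => ?_
  calc -(P x * |d x y|) ≤ -(l x y * |d x y|) := by gcongr; exact hl.le_fst x y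
    _ = l x y * -|d x y| := by ring
    _ ≤ l x y * d x y := mul_le_mul_of_nonneg_left (neg_abs_le _) (hl.nonneg x y)

lemma le_W1 (hP : P ∈ stdSimplex ℝ X) (hQ : Q ∈ stdSimplex ℝ Y) {d : X → Y → ℝ} {c : ℝ}
    (h : ∀ lam, IsCoupling P Q lam → c ≤ transportCost lam d) : c ≤ W1 P Q d := by
  have hPQ := IsCoupling.mul hP hQ
  refine le_csInf ⟨_, _, hPQ.nonneg, hPQ.sum_fst, hPQ.sum_snd, rfl⟩ ?_
  rintro _ ⟨lam, h_nonneg, h_fst, h_snd, rfl⟩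
  exact h lam ⟨h_nonneg, h_fst, h_snd⟩

lemma W1_le_of_forall_le (hP : P ∈ stdSimplex ℝ X) (hQ : Q ∈ stdSimplex ℝ Y) {d : X → Y → ℝ}
    {K : ℝ} (hd : ∀ x y, d x y ≤ K) : W1 P Q d ≤ K := by
  have hPQ := IsCoupling.mul hP hQ
  calc W1 P Q d ≤ ∑ x, ∑ y, P x * Q y * d x y := W1_le_transportCost hPQ d
    _ ≤ ∑ x, ∑ y, P x * Q y * K := by
        gcongr with x _ y _
        · exact hPQ.nonneg x y
        · exact hd x y
    _ = K := by simp only [← Finset.sum_mul, hPQ.sum_fst, hP.2, one_mul]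

lemma W1_flip_le (hP : P ∈ stdSimplex ℝ X) (hQ : Q ∈ stdSimplex ℝ Y) (d : X → Y → ℝ) :
    W1 Q P (flip d) ≤ W1 P Q d :=
  le_W1 hP hQ fun lam hlam =>
    (W1_le_transportCost hlam.flip _).trans_eq (transportCost_flip lam d)

lemma W1_triangle (hP : P ∈ stdSimplex ℝ X) (hQ : Q ∈ stdSimplex ℝ Y) (hR : R ∈ stdSimplex ℝ Z)
    {f : X → Z → ℝ} {g : X → Y → ℝ} {h : Y → Z → ℝ} (hfgh : ∀ x y z, f x z ≤ g x y + h y z) :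
    W1 P R f ≤ W1 P Q g + W1 Q R h := by
  rw [← sub_le_iff_le_add]
  refine le_W1 hP hQ fun l hl => ?_
  rw [sub_le_comm]
  refine le_W1 hQ hR fun m hm => ?_
  obtain ⟨n, hn, hnlm⟩ := hl.exists_transportCost_le_add hm hfgh
  rw [sub_le_iff_le_add']
  exact (W1_le_transportCost hn f).trans hnlm

lemma W1_triangle4 (hP : P ∈ stdSimplex ℝ X) (hQ : Q ∈ stdSimplex ℝ Y) (hR : R ∈ stdSimplex ℝ Z)
    (hU : U ∈ stdSimplex ℝ W) {f : X → W → ℝ} {g : X → Y → ℝ} {h : Y → Z → ℝ} {k : Z → W → ℝ}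
    (hfghk : ∀ x y z w, f x w ≤ g x y + h y z + k z w) :
    W1 P U f ≤ W1 P Q g + W1 Q R h + W1 R U k := by
  have : Nonempty Z := not_isEmpty_iff.1 fun _ => by simpa using hR.2
  -- `h` followed by `k`, at the cheapest intermediate point, is the ground cost from `Q` to `U`.
  calc W1 P U f ≤ W1 P Q g + W1 Q U fun y w => ⨅ z, h y z + k z w :=
        W1_triangle hP hQ hU fun x y w => by
          rw [← sub_le_iff_le_add']
          exact le_ciInf fun z => by linarith [hfghk x y z w]
    _ ≤ W1 P Q g + (W1 Q R h + W1 R U k) := by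
        gcongr
        exact W1_triangle hQ hR hU fun y z w => ciInf_le (Set.finite_range _).bddBelow z
    _ = W1 P Q g + W1 Q R h + W1 R U k := (add_assoc _ _ _).symm

end Wasserstein

section Hausdorff

variable {A A' B B' : Type*}

/-- The Hausdorff-type lifting `H(A, B; c)` of a cost `c` between actions. As in the definition of
the GBSM, its second term is the min-max `min_a max_b`, not the `max_b min_a` of the Hausdorff
metric. -/
def hausdorffCost (c : A → B → ℝ) : ℝ :=
  max (⨆ a, ⨅ b, c a b) (⨅ a, ⨆ b, c a b)

variable [Finite A] [Finite B] [Nonempty A] [Nonempty B]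

lemma hausdorffCost_le_iff {c : A → B → ℝ} {ε : ℝ} :
    hausdorffCost c ≤ ε ↔ (∀ a, ∃ b, c a b ≤ ε) ∧ ∃ a, ∀ b, c a b ≤ ε := by
  simp only [hausdorffCost, max_le_iff, ciSup_le_iff (Set.finite_range _).bddAbove,
    ciInf_le_iff_exists_le_of_finite]

lemma biTotal_le_hausdorffCost (c : A → B → ℝ) :
    Relator.BiTotal fun a b => c a b ≤ hausdorffCost c := by
  obtain ⟨hleft, a, ha⟩ := hausdorffCost_le_iff.1 (le_refl (hausdorffCost c))
  exact ⟨hleft, fun b => ⟨a, ha b⟩⟩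

variable [Finite A'] [Finite B'] [Nonempty A'] [Nonempty B']

lemma hausdorffCost_le_add_of_biTotal {r : A → A' → Prop} {q : B → B' → Prop}
    (hr : Relator.BiTotal r) (hq : Relator.BiTotal q) {f : A → B → ℝ} {h : A' → B' → ℝ} {ε : ℝ}
    (hfh : ∀ a a' b b', r a a' → q b b' → f a b ≤ h a' b' + ε) :
    hausdorffCost f ≤ hausdorffCost h + ε := by
  obtain ⟨hleft, a', ha'⟩ := hausdorffCost_le_iff.1 (le_refl (hausdorffCost h))
  refine hausdorffCost_le_iff.2 ⟨fun a => ?_, ?_⟩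
  · obtain ⟨a', haa'⟩ := hr.1 a
    obtain ⟨b', hb'⟩ := hleft a'
    obtain ⟨b, hbb'⟩ := hq.2 b'
    exact ⟨b, (hfh a a' b b' haa' hbb').trans (by gcongr)⟩
  · obtain ⟨a, haa'⟩ := hr.2 a'
    refine ⟨a, fun b => ?_⟩
    obtain ⟨b', hbb'⟩ := hq.1 b
    exact (hfh a a' b b' haa' hbb').trans (by gcongr; exact ha' b')

end Hausdorff

section Quadrangle

variable {X X' Y Y' : Type*} {f : X → Y → ℝ} {h : X' → Y' → ℝ} {g : X → X' → ℝ} {k : Y → Y' → ℝ}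

/-- The quadrangle inequality for four costs between four different spaces, stated for a pair of
opposite sides `f`, `h` and the pair `g`, `k` joining them. For a single metric it reads
`|d(x, y) - d(x', y')| ≤ d(x, x') + d(y, y')`. -/
def QuadrangleIneq (f : X → Y → ℝ) (h : X' → Y' → ℝ) (g : X → X' → ℝ) (k : Y → Y' → ℝ) : Prop :=
  ∀ x x' y y', |f x y - h x' y'| ≤ g x x' + k y y'

namespace QuadrangleIneq

lemma abs_W1_sub_W1_le [Fintype X] [Fintype X'] [Fintype Y] [Fintype Y']
    (H : QuadrangleIneq f h g k) {P : X → ℝ} {P' : X' → ℝ} {Q : Y → ℝ} {Q' : Y' → ℝ}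
    (hP : P ∈ stdSimplex ℝ X) (hP' : P' ∈ stdSimplex ℝ X')
    (hQ : Q ∈ stdSimplex ℝ Y) (hQ' : Q' ∈ stdSimplex ℝ Y') :
    |W1 P Q f - W1 P' Q' h| ≤ W1 P P' g + W1 Q Q' k := by
  have hf : W1 P Q f ≤ W1 P P' g + W1 P' Q' h + W1 Q' Q (flip k) :=
    W1_triangle4 hP hP' hQ' hQ fun x x' y' y => by
      linarith [(abs_sub_le_iff.1 (H x x' y y')).1, show flip k y' y = k y y' from rfl]
  have hh : W1 P' Q' h ≤ W1 P' P (flip g) + W1 P Q f + W1 Q Q' k :=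
    W1_triangle4 hP' hP hQ hQ' fun x' x y y' => by
      linarith [(abs_sub_le_iff.1 (H x x' y y')).2, show flip g x' x = g x x' from rfl]
  rw [abs_sub_le_iff]
  constructor <;> linarith [W1_flip_le hP hP' g, W1_flip_le hQ hQ' k]

lemma abs_hausdorffCost_sub_hausdorffCost_le [Finite X] [Finite X'] [Finite Y] [Finite Y']
    [Nonempty X] [Nonempty X'] [Nonempty Y] [Nonempty Y'] (H : QuadrangleIneq f h g k) :
    |hausdorffCost f - hausdorffCost h| ≤ hausdorffCost g + hausdorffCost k := by
  have hg := biTotal_le_hausdorffCost g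
  have hk := biTotal_le_hausdorffCost k
  rw [abs_sub_le_iff, sub_le_iff_le_add', sub_le_iff_le_add']
  constructor
  · refine hausdorffCost_le_add_of_biTotal hg hk fun x x' y y' hx hy => ?_
    linarith [(abs_sub_le_iff.1 (H x x' y y')).1]
  · refine hausdorffCost_le_add_of_biTotal (r := fun x' x => g x x' ≤ hausdorffCost g)
      (q := fun y' y => k y y' ≤ hausdorffCost k) ⟨hg.2, hg.1⟩ ⟨hk.2, hk.1⟩
      fun x' x y' y hx hy => ?_
    linarith [(abs_sub_le_iff.1 (H x x' y y')).2]

end QuadrangleIneq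

end Quadrangle

lemma FinMDP.P_mem_stdSimplex (M : FinMDP S₁ A₁) (s : S₁) (a : A₁) : M.P s a ∈ stdSimplex ℝ S₁ :=
  ⟨M.P_nonneg s a, M.P_sum s a⟩

section GBSM

lemma gbsmF_apply (M₁ : FinMDP S₁ A₁) (M₂ : FinMDP S₂ A₂) (γ : ℝ) (d : S₁ → S₂ → ℝ)
    (s : S₁) (s' : S₂) :
    gbsmF M₁ M₂ γ d s s' = hausdorffCost fun a a' => gbsmDelta M₁ M₂ γ d s a s' a' :=
  rfl

/-- The `n`-th iterate `d_n` of the GBSM operator from the zero cost; `gbsm` is the supremum of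
these over `n`. -/
def gbsmIter (M₁ : FinMDP S₁ A₁) (M₂ : FinMDP S₂ A₂) (γ : ℝ) (n : ℕ) : S₁ → S₂ → ℝ :=
  (gbsmF M₁ M₂ γ)^[n] fun _ _ => 0

lemma gbsmIter_succ (M₁ : FinMDP S₁ A₁) (M₂ : FinMDP S₂ A₂) (γ : ℝ) (n : ℕ) :
    gbsmIter M₁ M₂ γ (n + 1) = gbsmF M₁ M₂ γ (gbsmIter M₁ M₂ γ n) :=
  Function.iterate_succ_apply' _ _ _

variable [Nonempty A₁] [Nonempty A₂] {M₁ : FinMDP S₁ A₁} {M₂ : FinMDP S₂ A₂} {γ C K : ℝ}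

lemma gbsmF_le {d : S₁ → S₂ → ℝ} (hγ : 0 ≤ γ) (hC : ∀ s a s' a', |M₁.R s a - M₂.R s' a'| ≤ C)
    (hd : ∀ s s', d s s' ≤ K) (s : S₁) (s' : S₂) : gbsmF M₁ M₂ γ d s s' ≤ C + γ * K := by
  have hδ : ∀ a a', gbsmDelta M₁ M₂ γ d s a s' a' ≤ C + γ * K := fun a a' =>
    add_le_add (hC s a s' a') <| mul_le_mul_of_nonneg_left
      (W1_le_of_forall_le (M₁.P_mem_stdSimplex s a) (M₂.P_mem_stdSimplex s' a') hd) hγ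
  obtain ⟨a⟩ := ‹Nonempty A₁›
  obtain ⟨a'⟩ := ‹Nonempty A₂›
  rw [gbsmF_apply]
  exact hausdorffCost_le_iff.2 ⟨fun b => ⟨a', hδ b a'⟩, a, hδ a⟩

lemma gbsmIter_le (hγ0 : 0 ≤ γ) (hγ1 : γ < 1) (hC : ∀ s a s' a', |M₁.R s a - M₂.R s' a'| ≤ C)
    (n : ℕ) (s : S₁) (s' : S₂) : gbsmIter M₁ M₂ γ n s s' ≤ C / (1 - γ) := by
  have hγ : 0 < 1 - γ := sub_pos.2 hγ1
  induction n generalizing s s' with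
  | zero =>
    obtain ⟨a⟩ := ‹Nonempty A₁›
    obtain ⟨a'⟩ := ‹Nonempty A₂›
    exact div_nonneg ((abs_nonneg _).trans (hC s a s' a')) hγ.le
  | succ n ih =>
    calc gbsmIter M₁ M₂ γ (n + 1) s s' ≤ C + γ * (C / (1 - γ)) := by
          rw [gbsmIter_succ]
          exact gbsmF_le hγ0 hC ih s s'
      _ = C / (1 - γ) := by field_simp; ring

lemma bddAbove_range_gbsmIter (M₁ : FinMDP S₁ A₁) (M₂ : FinMDP S₂ A₂) (hγ0 : 0 ≤ γ) (hγ1 : γ < 1)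
    (s : S₁) (s' : S₂) : BddAbove (Set.range fun n => gbsmIter M₁ M₂ γ n s s') := by
  obtain ⟨C, hC⟩ := Finite.exists_le
    fun p : (S₁ × A₁) × (S₂ × A₂) => |M₁.R p.1.1 p.1.2 - M₂.R p.2.1 p.2.2|
  refine ⟨C / (1 - γ), ?_⟩
  rintro _ ⟨n, rfl⟩
  exact gbsmIter_le hγ0 hγ1 (fun t a t' a' => hC ((t, a), (t', a'))) n s s'

lemma gbsmIter_le_gbsm (M₁ : FinMDP S₁ A₁) (M₂ : FinMDP S₂ A₂) (hγ0 : 0 ≤ γ) (hγ1 : γ < 1)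
    (n : ℕ) (s : S₁) (s' : S₂) : gbsmIter M₁ M₂ γ n s s' ≤ gbsm M₁ M₂ γ s s' :=
  le_ciSup (bddAbove_range_gbsmIter M₁ M₂ hγ0 hγ1 s s') n

end GBSM

section GBSMQuadrangle

variable {S₁' A₁' S₂' A₂' : Type*} [Fintype S₁'] [Fintype A₁'] [Fintype S₂'] [Fintype A₂']
  (M₁ : FinMDP S₁ A₁) (M₁' : FinMDP S₁' A₁') (M₂ : FinMDP S₂ A₂) (M₂' : FinMDP S₂' A₂') {γ : ℝ}
  {f : S₁ → S₂ → ℝ} {h : S₁' → S₂' → ℝ} {g : S₁ → S₁' → ℝ} {k : S₂ → S₂' → ℝ}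

lemma quadrangleIneq_gbsmDelta (H : QuadrangleIneq f h g k) (hγ : 0 ≤ γ)
    (s : S₁) (s' : S₁') (t : S₂) (t' : S₂') :
    QuadrangleIneq (fun a b => gbsmDelta M₁ M₂ γ f s a t b)
      (fun a' b' => gbsmDelta M₁' M₂' γ h s' a' t' b')
      (fun a a' => gbsmDelta M₁ M₁' γ g s a s' a')
      (fun b b' => gbsmDelta M₂ M₂' γ k t b t' b') := by
  intro a a' b b'
  have hR : |(|M₁.R s a - M₂.R t b| - |M₁'.R s' a' - M₂'.R t' b'|)| ≤
      |M₁.R s a - M₁'.R s' a'| + |M₂.R t b - M₂'.R t' b'| := by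
    simpa only [Real.dist_eq] using
      dist_dist_dist_le (M₁.R s a) (M₂.R t b) (M₁'.R s' a') (M₂'.R t' b')
  have hW := H.abs_W1_sub_W1_le (M₁.P_mem_stdSimplex s a) (M₁'.P_mem_stdSimplex s' a')
    (M₂.P_mem_stdSimplex t b) (M₂'.P_mem_stdSimplex t' b')
  rw [abs_sub_le_iff] at hR hW ⊢
  simp only [gbsmDelta]
  constructor
  · linarith [mul_le_mul_of_nonneg_left hW.1 hγ]
  · linarith [mul_le_mul_of_nonneg_left hW.2 hγ]

variable [Nonempty A₁] [Nonempty A₁'] [Nonempty A₂] [Nonempty A₂']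

lemma quadrangleIneq_gbsmF (H : QuadrangleIneq f h g k) (hγ : 0 ≤ γ) :
    QuadrangleIneq (gbsmF M₁ M₂ γ f) (gbsmF M₁' M₂' γ h) (gbsmF M₁ M₁' γ g)
      (gbsmF M₂ M₂' γ k) := by
  intro s s' t t'
  simp only [gbsmF_apply]
  exact (quadrangleIneq_gbsmDelta M₁ M₁' M₂ M₂' H hγ s s' t t')
    |>.abs_hausdorffCost_sub_hausdorffCost_le

lemma quadrangleIneq_gbsmIter (hγ : 0 ≤ γ) (n : ℕ) :
    QuadrangleIneq (gbsmIter M₁ M₂ γ n) (gbsmIter M₁' M₂' γ n) (gbsmIter M₁ M₁' γ n)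
      (gbsmIter M₂ M₂' γ n) := by
  induction n with
  | zero => simp [QuadrangleIneq, gbsmIter]
  | succ n ih =>
    simp only [gbsmIter_succ]
    exact quadrangleIneq_gbsmF M₁ M₁' M₂ M₂' ih hγ

end GBSMQuadrangle

theorem ssa_estimation_error_bound_general
    {S₁' A₁' S₂' A₂' : Type*} [Fintype S₁'] [Fintype A₁'] [Fintype S₂'] [Fintype A₂']
    [Nonempty A₁] [Nonempty A₁'] [Nonempty A₂] [Nonempty A₂']
    (M₁ : FinMDP S₁ A₁) (M₁' : FinMDP S₁' A₁') (M₂ : FinMDP S₂ A₂) (M₂' : FinMDP S₂' A₂')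
    {γ : ℝ} (hγ0 : 0 ≤ γ) (hγ1 : γ < 1) :
    QuadrangleIneq (gbsm M₁ M₂ γ) (gbsm M₁' M₂' γ) (gbsm M₁ M₁' γ) (gbsm M₂ M₂' γ) := by
  intro s s' t t'
  refine abs_ciSup_sub_ciSup_le (bddAbove_range_gbsmIter M₁ M₂ hγ0 hγ1 s t)
    (bddAbove_range_gbsmIter M₁' M₂' hγ0 hγ1 s' t') fun n => ?_
  exact (quadrangleIneq_gbsmIter M₁ M₁' M₂ M₂' hγ0 n s s' t t').trans <|
    add_le_add (gbsmIter_le_gbsm M₁ M₁' hγ0 hγ1 n s s') (gbsmIter_le_gbsm M₂ M₂' hγ0 hγ1 n t t')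

/-- state-similarity estimation error bound. `M₁hat`, `M₂hat` differ
from `M₁`, `M₂` only in their transition probabilities. -/
theorem ssa_estimation_error_bound
    [Nonempty S₁] [Nonempty A₁] [Nonempty S₂] [Nonempty A₂]
    (M₁ M₁hat : FinMDP S₁ A₁) (M₂ M₂hat : FinMDP S₂ A₂) (γ Rbar : ℝ)
    (hγ0 : 0 ≤ γ) (hγ1 : γ < 1) (hRbar : 0 < Rbar)
    (hR₁ : ∀ s a, 0 ≤ M₁.R s a ∧ M₁.R s a ≤ Rbar)
    (hR₂ : ∀ s a, 0 ≤ M₂.R s a ∧ M₂.R s a ≤ Rbar)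
    (hRhat₁ : M₁hat.R = M₁.R) (hRhat₂ : M₂hat.R = M₂.R) :
    ∀ (s : S₁) (s' : S₂),
      |gbsm M₁ M₂ γ s s' - gbsm M₁hat M₂hat γ s s'| ≤
        (⨆ s : S₁, gbsm M₁ M₁hat γ s s) + ⨆ s' : S₂, gbsm M₂ M₂hat γ s' s' :=
  fun s s' => (ssa_estimation_error_bound_general M₁ M₁hat M₂ M₂hat hγ0 hγ1 s s s' s').trans <|
    add_le_add (le_ciSup (f := fun s => gbsm M₁ M₁hat γ s s) (Set.finite_range _).bddAbove s)
      (le_ciSup (f := fun s' => gbsm M₂ M₂hat γ s' s') (Set.finite_range _).bddAbove s')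

end
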